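/- Let ω_r be a minuscule fundamental weight, let w_0 be the longest element of W, let w_0^{ω_r} be the longest element of the stabilizer of ω_r in W, and set u_r = w_0 w_0^{ω_r}. Then u_r^{−1}(ρ) = ρ − h·ω_r; in particular u_r^{−1}(ρ) ≡ ρ + ω_r modulo (1+h)P, so ρ and ρ + ω_r lie in the same W-orbit of P/(1+h)P. -/

import Mathlib

noncomputable section

open scoped RealInnerProductSpace BigOperators

/-- Euclidean space `ℝ^n`, the ambient space of the root system. -/
abbrev Vn (n : ℕ) := EuclideanSpace ℝ (Fin n)

/-- The coroot `α^∨ = 2α/(α,α)` of a vector `α`. -/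
def coroot {n : ℕ} (α : Vn n) : Vn n := (2 / ⟪α, α⟫) • α

/-- The reflection `s_α` applied to `β`: `β − (β, α^∨)·α`. -/
def reflVec {n : ℕ} (α β : Vn n) : Vn n := β - (2 * ⟪β, α⟫ / ⟪α, α⟫) • α

/-- An irreducible reduced crystallographic root system of rank `n` in `ℝ^n`, together
with a fixed base of simple roots `α_1,…,α_n`, the corresponding set of positive roots,
the fundamental weights `ω_1,…,ω_n` and the highest short root `θ`. -/
structure RootSystemData (n : ℕ) where
  /-- the set of roots -/
  R : Finset (Vn n)
  /-- the set of positive roots -/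
  Rplus : Finset (Vn n)
  /-- the simple roots `α_1,…,α_n` -/
  sroot : Fin n → Vn n
  /-- the fundamental weights `ω_1,…,ω_n` -/
  fw : Fin n → Vn n
  /-- the highest short root `θ` -/
  hst : Vn n
  root_ne_zero : ∀ α ∈ R, α ≠ (0 : Vn n)
  span_top : Submodule.span ℝ (R : Set (Vn n)) = ⊤
  reflect_mem : ∀ α ∈ R, ∀ β ∈ R, reflVec α β ∈ R
  crystallographic : ∀ α ∈ R, ∀ β ∈ R, ∃ z : ℤ, 2 * ⟪β, α⟫ / ⟪α, α⟫ = (z : ℝ)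
  reduced : ∀ α ∈ R, ∀ c : ℝ, c • α ∈ R → c = 1 ∨ c = -1
  irreducible : ∀ S : Set (Vn n), (∃ α ∈ R, α ∈ S) →
    (∀ α ∈ R, ∀ β ∈ R, α ∈ S → ⟪α, β⟫ ≠ 0 → β ∈ S) → ∀ β ∈ R, β ∈ S
  sroot_mem : ∀ i, sroot i ∈ Rplus
  pos_sub : Rplus ⊆ R
  pos_or : ∀ α ∈ R, α ∈ Rplus ∨ -α ∈ Rplus
  pos_not_and : ∀ α ∈ Rplus, -α ∉ Rplus
  pos_decomp : ∀ α ∈ Rplus, ∃ c : Fin n → ℕ, α = ∑ i, (c i : ℝ) • sroot i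
  fw_pair : ∀ i j, ⟪fw i, coroot (sroot j)⟫ = if i = j then 1 else 0
  theta_mem : hst ∈ Rplus
  theta_short : ∀ α ∈ R, ⟪hst, hst⟫ ≤ ⟪α, α⟫
  theta_highest : ∀ α ∈ R, ∃ c : Fin n → ℝ, (∀ i, 0 ≤ c i) ∧
    coroot hst - coroot α = ∑ i, c i • coroot (sroot i)

namespace RootSystemData

variable {n : ℕ} (D : RootSystemData n)

/-- The weight lattice `P = ⊕_i ℤ·ω_i`. -/
def P : Submodule ℤ (Vn n) := Submodule.span ℤ (Set.range D.fw)

/-- `ρ = ω_1 + ⋯ + ω_n` (the half-sum of the positive roots). -/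
def rho : Vn n := ∑ i, D.fw i

/-- The Coxeter number `h = 1 + (ρ, θ^∨)`. -/
def h : ℝ := 1 + ⟪D.rho, coroot D.hst⟫

/-- The Weyl group `W`, as the subgroup of `GL(ℝ^n)` generated by the reflections
`s_α`, `α ∈ R`. -/
def Weyl : Subgroup ((Vn n) ≃ₗ[ℝ] (Vn n)) :=
  Subgroup.closure { w | ∃ α ∈ D.R, ∀ v, w v = reflVec α v }

/-- `ω_r` is a minuscule (fundamental) weight: `(ω_r, α^∨) ≤ 1` for all `α ∈ R_+`. -/
def Minuscule (r : Fin n) : Prop := ∀ α ∈ D.Rplus, ⟪D.fw r, coroot α⟫ ≤ 1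

end RootSystemData

/-!
Let `w` be longest in the stabilizer of a dominant `μ`. Neither `-w` nor `-w⁻¹` decreases the height
of a positive root orthogonal to `μ`, so `-w` permutes the simple roots orthogonal to `μ`, and
`⟪w⁻¹ ρ, α_j^∨⟫ = -1` for those. For `μ = 0` this says `w₀⁻¹ ρ = -ρ`. For `μ = ω_r` it says
`w⁻¹ ρ = c ω_r - ρ` for some `c`, that is, `⟪ρ, w v⟫ = c ⟪ω_r, v⟫ - ⟪ρ, v⟫` for all `v`, and it
remains to see that `c = h`:
* for `v = α_r^∨`, as `θ^∨` is the highest coroot, `c - 1 = ⟪ρ, w α_r^∨⟫ ≤ ⟪ρ, θ^∨⟫ = h - 1`;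
* for `v = θ^∨`, `⟪ω_r, v⟫ = 1` because `ω_r` is minuscule, so `w v` is a positive coroot with
  `⟪ω_r, w v⟫ = 1`, and `1 ≤ ⟪ρ, w v⟫ = c - (h - 1)`.
-/

lemma reflVec_eq_reflection {n : ℕ} (α β : Vn n) : reflVec α β = (ℝ ∙ α)ᗮ.reflection β := by
  rw [Submodule.reflection_orthogonal_apply, Submodule.reflection_singleton_apply, reflVec,
    real_inner_comm β α, real_inner_self_eq_norm_sq, RCLike.ofReal_real_eq_id, id_eq]
  module

lemma inner_reflVec_reflVec {n : ℕ} (α v w : Vn n) : ⟪reflVec α v, reflVec α w⟫ = ⟪v, w⟫ := by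
  simp only [reflVec_eq_reflection, LinearIsometryEquiv.inner_map_map]

lemma inner_coroot {n : ℕ} (v α : Vn n) : ⟪v, coroot α⟫ = 2 / ⟪α, α⟫ * ⟪v, α⟫ :=
  real_inner_smul_right _ _ _

lemma coroot_neg {n : ℕ} (α : Vn n) : coroot (-α) = -coroot α := by
  rw [coroot, coroot, inner_neg_neg, smul_neg]

namespace RootSystemData

variable {n : ℕ} (D : RootSystemData n)

lemma two_div_inner_sroot_self_pos (i : Fin n) : 0 < 2 / ⟪D.sroot i, D.sroot i⟫ :=
  div_pos two_pos (real_inner_self_pos.mpr (D.root_ne_zero _ (D.pos_sub (D.sroot_mem i))))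

lemma span_range_sroot : Submodule.span ℝ (Set.range D.sroot) = ⊤ := by
  have pos_mem : ∀ α ∈ D.Rplus, α ∈ Submodule.span ℝ (Set.range D.sroot) := by
    intro α hα
    obtain ⟨c, rfl⟩ := D.pos_decomp α hα
    exact Submodule.sum_smul_mem _ _ fun i _ => Submodule.subset_span (Set.mem_range_self i)
  rw [eq_top_iff, ← D.span_top, Submodule.span_le]
  intro α hα
  rcases D.pos_or α hα with hpos | hneg
  · exact pos_mem α hpos
  · exact neg_mem_iff.mp (pos_mem _ hneg)

lemma ext_inner_coroot_sroot {v w : Vn n}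
    (h : ∀ j, ⟪v, coroot (D.sroot j)⟫ = ⟪w, coroot (D.sroot j)⟫) : v = w := by
  have inner_eq : innerₛₗ ℝ v = innerₛₗ ℝ w :=
    LinearMap.ext_on_range D.span_range_sroot fun j =>
      mul_left_cancel₀ (D.two_div_inner_sroot_self_pos j).ne'
        (by simpa only [inner_coroot, innerₛₗ_apply_apply] using h j)
  exact ext_inner_right ℝ (LinearMap.congr_fun inner_eq)

lemma inner_rho_coroot_sroot (j : Fin n) : ⟪D.rho, coroot (D.sroot j)⟫ = 1 := by
  simp [rho, sum_inner, D.fw_pair]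

lemma inner_fw_sroot_of_ne {i j : Fin n} (hij : i ≠ j) : ⟪D.fw i, D.sroot j⟫ = 0 := by
  have h := D.fw_pair i j
  rw [inner_coroot, if_neg hij] at h
  exact (mul_eq_zero.mp h).resolve_left (D.two_div_inner_sroot_self_pos j).ne'

lemma inner_fw_sroot_nonneg (i j : Fin n) : 0 ≤ ⟪D.fw i, D.sroot j⟫ := by
  refine nonneg_of_mul_nonneg_right ?_ (D.two_div_inner_sroot_self_pos j)
  rw [← inner_coroot, D.fw_pair]
  split_ifs <;> norm_num

lemma inner_fw_coroot_nonneg (i : Fin n) {α : Vn n} (hα : α ∈ D.Rplus) :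
    0 ≤ ⟪D.fw i, coroot α⟫ := by
  rw [inner_coroot]
  refine mul_nonneg (div_nonneg zero_le_two real_inner_self_nonneg) ?_
  obtain ⟨c, hc⟩ := D.pos_decomp α hα
  rw [hc, inner_sum]
  refine Finset.sum_nonneg fun j _ => ?_
  rw [real_inner_smul_right]
  exact mul_nonneg (Nat.cast_nonneg _) (D.inner_fw_sroot_nonneg i j)

lemma inner_fw_coroot_le_inner_rho_coroot (i : Fin n) {α : Vn n} (hα : α ∈ D.Rplus) :
    ⟪D.fw i, coroot α⟫ ≤ ⟪D.rho, coroot α⟫ := by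
  rw [rho, sum_inner]
  exact Finset.single_le_sum (f := fun j => ⟪D.fw j, coroot α⟫)
    (fun j _ => D.inner_fw_coroot_nonneg j hα) (Finset.mem_univ i)

lemma inner_fw_coroot_le_inner_fw_coroot_hst (i : Fin n) {α : Vn n} (hα : α ∈ D.R) :
    ⟪D.fw i, coroot α⟫ ≤ ⟪D.fw i, coroot D.hst⟫ := by
  obtain ⟨c, hc, hsub⟩ := D.theta_highest α hα
  have hdiff : ⟪D.fw i, coroot D.hst - coroot α⟫ = c i := by
    simp [hsub, inner_sum, real_inner_smul_right, D.fw_pair]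
  rw [inner_sub_right] at hdiff
  linarith [hc i]

lemma inner_rho_coroot_le_inner_rho_coroot_hst {α : Vn n} (hα : α ∈ D.R) :
    ⟪D.rho, coroot α⟫ ≤ ⟪D.rho, coroot D.hst⟫ := by
  simp only [rho, sum_inner]
  exact Finset.sum_le_sum fun i _ => D.inner_fw_coroot_le_inner_fw_coroot_hst i hα

variable {D} in
lemma Minuscule.inner_fw_coroot_hst {r : Fin n} (hr : D.Minuscule r) :
    ⟪D.fw r, coroot D.hst⟫ = 1 := by
  refine le_antisymm (hr _ D.theta_mem) ?_
  simpa [D.fw_pair] using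
    D.inner_fw_coroot_le_inner_fw_coroot_hst r (D.pos_sub (D.sroot_mem r))

/-- The height functional on the root space, i.e. the linear functional equal to `1` on every
simple root. The summand of index `i` is the pairing with the fundamental coweight
`ω_i^∨ = 2ω_i/(α_i,α_i)`. -/
def height : Vn n →ₗ[ℝ] ℝ := ∑ i, (2 / ⟪D.sroot i, D.sroot i⟫) • innerₛₗ ℝ (D.fw i)

lemma height_sroot (j : Fin n) : D.height (D.sroot j) = 1 := by
  have hj := D.fw_pair j j
  rw [inner_coroot, if_pos rfl] at hj
  rw [height, LinearMap.sum_apply, Finset.sum_eq_single j]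
  · simpa using hj
  · intro i _ hij
    simp [D.inner_fw_sroot_of_ne hij]
  · simp

lemma height_sum_smul_sroot (c : Fin n → ℕ) :
    D.height (∑ i, (c i : ℝ) • D.sroot i) = (∑ i, c i : ℕ) := by
  simp [D.height_sroot]

lemma one_le_height {α : Vn n} (hα : α ∈ D.Rplus) : 1 ≤ D.height α := by
  obtain ⟨c, hc⟩ := D.pos_decomp α hα
  rw [hc, height_sum_smul_sroot, Nat.one_le_cast, Nat.one_le_iff_ne_zero]
  intro hsum
  refine D.root_ne_zero α (D.pos_sub hα) ?_
  simpa [Finset.sum_eq_zero_iff.mp hsum] using hc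

lemma exists_eq_sroot_of_height_le_one {α : Vn n} (hα : α ∈ D.Rplus) (hle : D.height α ≤ 1) :
    ∃ i, α = D.sroot i := by
  obtain ⟨c, hc⟩ := D.pos_decomp α hα
  have hsum : ∑ i, c i = 1 := by
    have heq := le_antisymm hle (D.one_le_height hα)
    rwa [hc, height_sum_smul_sroot, Nat.cast_eq_one] at heq
  obtain ⟨i, hi⟩ : ∃ i, Finsupp.equivFunOnFinite.symm c = Finsupp.single i 1 := by
    rwa [← Finsupp.sum_eq_one_iff, Finsupp.sum_fintype _ _ fun _ => rfl]
  have hci : c = Pi.single i 1 := by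
    rw [← Finsupp.single_eq_pi_single, ← hi, Finsupp.coe_equivFunOnFinite_symm]
  refine ⟨i, ?_⟩
  simpa [hci, Pi.single_apply] using hc

namespace Weyl

variable {D} {w : Vn n ≃ₗ[ℝ] Vn n}

lemma inner_map_map (hw : w ∈ D.Weyl) (x y : Vn n) : ⟪w x, w y⟫ = ⟪x, y⟫ := by
  rw [Weyl] at hw
  induction hw using Subgroup.closure_induction generalizing x y with
  | mem s hs =>
    obtain ⟨α, -, hs⟩ := hs
    rw [hs, hs, inner_reflVec_reflVec]
  | one => rfl
  | mul a b _ _ ha hb => exact (ha _ _).trans (hb x y)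
  | inv a _ ha => simpa using (ha (a⁻¹ x) (a⁻¹ y)).symm

lemma inner_inv_apply (hw : w ∈ D.Weyl) (x y : Vn n) : ⟪w⁻¹ x, y⟫ = ⟪x, w y⟫ := by
  simpa using (inner_map_map hw (w⁻¹ x) y).symm

open scoped Pointwise in
lemma apply_mem_R (hw : w ∈ D.Weyl) {α : Vn n} (hα : α ∈ D.R) : w α ∈ D.R := by
  have hle : D.Weyl ≤ MulAction.stabilizer (Vn n ≃ₗ[ℝ] Vn n) (D.R : Set (Vn n)) := by
    rw [Weyl, Subgroup.closure_le]
    rintro s ⟨β, hβ, hs⟩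
    refine (MulAction.mem_stabilizer_set' D.R.finite_toSet).mpr fun γ hγ => ?_
    rw [LinearEquiv.smul_def, hs]
    exact D.reflect_mem β hβ γ hγ
  exact (MulAction.mem_stabilizer_set' D.R.finite_toSet).mp (hle hw) hα

lemma coroot_map (hw : w ∈ D.Weyl) (α : Vn n) : coroot (w α) = w (coroot α) := by
  rw [coroot, coroot, inner_map_map hw, map_smul]

end Weyl

/-- `w` is the longest element of the stabilizer of `μ` in the Weyl group, for dominant `μ`. It is
described by its action on the positive roots: those orthogonal to `μ` become negative, the others
stay positive. For `μ = 0` it is the longest element of the whole Weyl group. -/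
structure IsLongestInStabilizer (μ : Vn n) (w : Vn n ≃ₗ[ℝ] Vn n) : Prop where
  mem_Weyl : w ∈ D.Weyl
  map_eq : w μ = μ
  neg_map_mem : ∀ α ∈ D.Rplus, ⟪α, μ⟫ = 0 → -(w α) ∈ D.Rplus
  map_mem : ∀ α ∈ D.Rplus, ⟪α, μ⟫ ≠ 0 → w α ∈ D.Rplus

namespace IsLongestInStabilizer

variable {D} {μ : Vn n} {w : Vn n ≃ₗ[ℝ] Vn n}

lemma inner_map_left (hw : D.IsLongestInStabilizer μ w) (α : Vn n) : ⟪w α, μ⟫ = ⟪α, μ⟫ := by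
  simpa only [hw.map_eq] using Weyl.inner_map_map hw.mem_Weyl α μ

protected lemma inv (hw : D.IsLongestInStabilizer μ w) : D.IsLongestInStabilizer μ w⁻¹ where
  mem_Weyl := inv_mem hw.mem_Weyl
  map_eq := by simpa using (w.symm_apply_eq).mpr hw.map_eq.symm
  neg_map_mem α hα hαμ := by
    have inner_inv : ⟪w⁻¹ α, μ⟫ = 0 := by rw [Weyl.inner_inv_apply hw.mem_Weyl, hw.map_eq, hαμ]
    have inv_mem_R : w⁻¹ α ∈ D.R := Weyl.apply_mem_R (inv_mem hw.mem_Weyl) (D.pos_sub hα)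
    refine (D.pos_or _ inv_mem_R).resolve_left fun hpos => ?_
    exact D.pos_not_and α hα (by simpa using hw.neg_map_mem _ hpos inner_inv)
  map_mem α hα hαμ := by
    have inner_inv : ⟪-(w⁻¹ α), μ⟫ ≠ 0 := by
      rwa [inner_neg_left, Weyl.inner_inv_apply hw.mem_Weyl, hw.map_eq, neg_ne_zero]
    have inv_mem_R : w⁻¹ α ∈ D.R := Weyl.apply_mem_R (inv_mem hw.mem_Weyl) (D.pos_sub hα)
    refine (D.pos_or _ inv_mem_R).resolve_right fun hneg => ?_
    exact D.pos_not_and α hα (by simpa using hw.map_mem _ hneg inner_inv)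

lemma height_le_height_neg_map (hw : D.IsLongestInStabilizer μ w)
    (hμ : ∀ i, 0 ≤ ⟪μ, D.sroot i⟫) {α : Vn n} (hα : α ∈ D.Rplus) (hαμ : ⟪α, μ⟫ = 0) :
    D.height α ≤ D.height (-(w α)) := by
  obtain ⟨c, rfl⟩ := D.pos_decomp α hα
  have perp_of_mem_support : ∀ i, c i ≠ 0 → ⟪D.sroot i, μ⟫ = 0 := by
    have terms_zero := (Finset.sum_eq_zero_iff_of_nonneg fun i _ =>
      mul_nonneg (Nat.cast_nonneg (c i)) (hμ i)).mp
        (by simpa only [real_inner_comm μ, inner_sum, real_inner_smul_right] using hαμ)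
    intro i hi
    rw [real_inner_comm]
    exact (mul_eq_zero.mp (terms_zero i (Finset.mem_univ i))).resolve_left
      (Nat.cast_ne_zero.mpr hi)
  simp only [map_sum, map_smul, ← Finset.sum_neg_distrib, ← smul_neg, smul_eq_mul, D.height_sroot]
  refine Finset.sum_le_sum fun i _ => ?_
  rcases eq_or_ne (c i) 0 with hi | hi
  · simp [hi]
  · gcongr
    exact D.one_le_height (hw.neg_map_mem _ (D.sroot_mem i) (perp_of_mem_support i hi))

lemma exists_neg_map_sroot_eq_sroot (hw : D.IsLongestInStabilizer μ w)
    (hμ : ∀ i, 0 ≤ ⟪μ, D.sroot i⟫) {j : Fin n} (hj : ⟪D.sroot j, μ⟫ = 0) :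
    ∃ i, -(w (D.sroot j)) = D.sroot i := by
  have hpos := hw.neg_map_mem _ (D.sroot_mem j) hj
  have hperp : ⟪-(w (D.sroot j)), μ⟫ = 0 := by
    rw [inner_neg_left, hw.inner_map_left, hj, neg_zero]
  refine D.exists_eq_sroot_of_height_le_one hpos ?_
  simpa [D.height_sroot] using hw.inv.height_le_height_neg_map hμ hpos hperp

lemma inner_inv_rho_coroot_sroot (hw : D.IsLongestInStabilizer μ w)
    (hμ : ∀ i, 0 ≤ ⟪μ, D.sroot i⟫) {j : Fin n} (hj : ⟪D.sroot j, μ⟫ = 0) :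
    ⟪w⁻¹ D.rho, coroot (D.sroot j)⟫ = -1 := by
  obtain ⟨i, hi⟩ := hw.exists_neg_map_sroot_eq_sroot hμ hj
  rw [Weyl.inner_inv_apply hw.mem_Weyl, ← Weyl.coroot_map hw.mem_Weyl,
    ← neg_neg (w (D.sroot j)), hi, coroot_neg, inner_neg_right, D.inner_rho_coroot_sroot]

end IsLongestInStabilizer

section LongestElements

variable {D} {w : Vn n ≃ₗ[ℝ] Vn n} {r : Fin n}

lemma IsLongestInStabilizer.inv_rho_of_zero (hw : D.IsLongestInStabilizer 0 w) :
    w⁻¹ D.rho = -D.rho := by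
  refine D.ext_inner_coroot_sroot fun j => ?_
  rw [hw.inner_inv_rho_coroot_sroot (by simp) (inner_zero_right _), inner_neg_left,
    D.inner_rho_coroot_sroot]

lemma IsLongestInStabilizer.exists_inv_rho_eq_smul_fw_sub_rho
    (hw : D.IsLongestInStabilizer (D.fw r) w) : ∃ c : ℝ, w⁻¹ D.rho = c • D.fw r - D.rho := by
  refine ⟨1 + ⟪w⁻¹ D.rho, coroot (D.sroot r)⟫, D.ext_inner_coroot_sroot fun j => ?_⟩
  rw [inner_sub_left, real_inner_smul_left, D.inner_rho_coroot_sroot, D.fw_pair]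
  rcases eq_or_ne r j with rfl | hrj
  · simp
  · have hj : ⟪D.sroot j, D.fw r⟫ = 0 := by rw [real_inner_comm, D.inner_fw_sroot_of_ne hrj]
    rw [hw.inner_inv_rho_coroot_sroot (D.inner_fw_sroot_nonneg r) hj, if_neg hrj]
    ring

lemma IsLongestInStabilizer.inv_rho_of_minuscule (hr : D.Minuscule r)
    (hw : D.IsLongestInStabilizer (D.fw r) w) : w⁻¹ D.rho = D.h • D.fw r - D.rho := by
  obtain ⟨c, hc⟩ := hw.exists_inv_rho_eq_smul_fw_sub_rho
  have inner_rho_map (α : Vn n) :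
      ⟪D.rho, coroot (w α)⟫ = c * ⟪D.fw r, coroot α⟫ - ⟪D.rho, coroot α⟫ := by
    rw [Weyl.coroot_map hw.mem_Weyl, ← Weyl.inner_inv_apply hw.mem_Weyl, hc, inner_sub_left,
      real_inner_smul_left]
  have c_le_h : c ≤ D.h := by
    have hle := D.inner_rho_coroot_le_inner_rho_coroot_hst
      (Weyl.apply_mem_R hw.mem_Weyl (D.pos_sub (D.sroot_mem r)))
    rw [inner_rho_map, D.fw_pair, if_pos rfl, D.inner_rho_coroot_sroot] at hle
    rw [RootSystemData.h]
    linarith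
  have h_le_c : D.h ≤ c := by
    have inner_hst : ⟪D.hst, D.fw r⟫ ≠ 0 := by
      rw [real_inner_comm]
      exact right_ne_zero_of_mul
        (((inner_coroot _ _).symm.trans hr.inner_fw_coroot_hst).trans_ne one_ne_zero)
    have inner_map_hst : ⟪D.fw r, coroot (w D.hst)⟫ = 1 := by
      rw [Weyl.coroot_map hw.mem_Weyl, ← Weyl.inner_inv_apply hw.mem_Weyl, hw.inv.map_eq,
        hr.inner_fw_coroot_hst]
    have hle := D.inner_fw_coroot_le_inner_rho_coroot r (hw.map_mem _ D.theta_mem inner_hst)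
    rw [inner_map_hst, inner_rho_map, hr.inner_fw_coroot_hst] at hle
    rw [RootSystemData.h]
    linarith
  rw [hc, le_antisymm c_le_h h_le_c]

end LongestElements

end RootSystemData

/-- let `ω_r` be a minuscule fundamental weight, `w₀` the longest element
of `W` (the unique element sending all positive roots to negative ones), `w₀ʳ` the
longest element of the stabilizer of `ω_r` in `W` (the unique element of `W` fixing
`ω_r`, sending the positive roots orthogonal to `ω_r` to negative roots and the
remaining positive roots to positive roots), and `u_r = w₀·w₀ʳ`.  Then
`u_r⁻¹(ρ) = ρ − h·ω_r`; in particular `u_r⁻¹(ρ) ≡ ρ + ω_r (mod (1+h)P)`, so `ρ` and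
`ρ + ω_r` lie in the same `W`-orbit of `P/(1+h)P`. -/
theorem stmt_5 {n : ℕ} (D : RootSystemData n) (r : Fin n) (hr : D.Minuscule r)
    (w0 : Vn n ≃ₗ[ℝ] Vn n) (hw0W : w0 ∈ D.Weyl)
    (hw0 : ∀ α ∈ D.Rplus, -(w0 α) ∈ D.Rplus)
    (w0r : Vn n ≃ₗ[ℝ] Vn n) (hw0rW : w0r ∈ D.Weyl)
    (hw0rfix : w0r (D.fw r) = D.fw r)
    (hw0rneg : ∀ α ∈ D.Rplus, ⟪α, D.fw r⟫ = 0 → -(w0r α) ∈ D.Rplus)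
    (hw0rpos : ∀ α ∈ D.Rplus, ⟪α, D.fw r⟫ ≠ 0 → w0r α ∈ D.Rplus) :
    (w0 * w0r)⁻¹ D.rho = D.rho - D.h • D.fw r ∧
      ∃ p ∈ D.P, (w0 * w0r)⁻¹ D.rho = D.rho + D.fw r + (1 + D.h) • p := by
  have longest_w0 : D.IsLongestInStabilizer 0 w0 :=
    ⟨hw0W, map_zero w0, fun α hα _ => hw0 α hα, fun α _ hα => absurd (inner_zero_right α) hα⟩
  have longest_w0r : D.IsLongestInStabilizer (D.fw r) w0r := ⟨hw0rW, hw0rfix, hw0rneg, hw0rpos⟩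
  have inv_rho : (w0 * w0r)⁻¹ D.rho = D.rho - D.h • D.fw r := by
    rw [mul_inv_rev, LinearEquiv.mul_apply, longest_w0.inv_rho_of_zero, map_neg,
      longest_w0r.inv_rho_of_minuscule hr, neg_sub]
  refine ⟨inv_rho, -D.fw r, neg_mem (Submodule.subset_span (Set.mem_range_self r)), ?_⟩
  rw [inv_rho]
  module
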